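/- Explicit wavelet matrix entries: let n ≥ 1, let C^n₁ be the (n+1)×(n+1) matrix with entries (C^n₁)_{i,j} = c_{i,j} for 0 ≤ i,j ≤ n, and let D = D^n₁ be the unique upper triangular matrix with positive diagonal entries and (D)_{n,n} = 1 satisfying the wavelet orthogonality conditions for C^n₁. Then D_{n−1,n−1} = 1/(2n) and D_{n−1,n} = −sqrt((2n+1)(2n−1))/(2n); and if moreover n ≥ 2, then D_{n−2,n−2} = 1/(2n−2), D_{n−2,n−1} = −sqrt((2n−1)(2n−3))/(2n−2), and D_{n−2,n} = 0. -/

import Mathlib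

/-!
Split by parity, the wavelet conditions say `(C Dᵀ)_{ij} = 0` for `i + j` odd and
`(D Dᵀ)_{ij} = δ_{ij}` for `i + j` even. The last row of the upper triangular matrix `D` is `eₙ`,
so row `n - 2`, being orthogonal to it, has last entry `0`. Hence for `k = n - 1` and `k = n - 2`,
row `k` of `D` has only two possibly nonzero entries, in columns `k` and `k + 1`; they form a unit
vector with positive first entry, orthogonal to `(c_{k+1,k}, c_{k+1,k+1})`. Everything therefore
reduces to `c_{k+1,k} = √((2k+3)(2k+1)) · c_{k+1,k+1}` with `c_{k+1,k+1} ≠ 0`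
(`alpertC_ratio`, `alpertC_diag_ne_zero`).

To obtain this, substitute `u = 2t - 1` and integrate by parts `j` times against
`dʲ/duʲ (u² - 1)ʲ` (`alpertC_eq`). For `j = k` and `j = k + 1` the other factor becomes an explicit
polynomial of degree at most one, because the `(2k+1)`-st derivative of `(X² - 1)^(k+1)` is
`(2k+2)! X` (`iterate_derivative_rodrigues`). What remains are the moments `∫ (u² - 1)ʲ du` over
`[-1,1]`, whose ratio is given by `moment_succ`.
-/

open MeasureTheory

/-- The orthonormal Legendre polynomial of degree `n` on `[-1,1]`,
`p̂_n(t) = sqrt((2n+1)/2) · (1/(2^n n!)) dⁿ/dtⁿ (t²-1)ⁿ`. -/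
noncomputable def legendreHat (n : ℕ) : ℝ → ℝ := fun t =>
  Real.sqrt ((2 * n + 1) / 2) * ((1 : ℝ) / (2 ^ n * n.factorial)) *
    iteratedDeriv n (fun s => (s ^ 2 - 1) ^ n) t

/-- The Alpert refinement coefficients `c_{i,j} = 2∫_0^1 p̂_i(t) p̂_j(2t-1) dt`. -/
noncomputable def alpertC (i j : ℕ) : ℝ :=
  2 * ∫ t in (0:ℝ)..1, legendreHat i t * legendreHat j (2 * t - 1)

open Matrix

/-- `D` is the wavelet matrix for the refinement matrix `C`: it is upper triangular with
positive diagonal entries, has bottom-right entry `1`, and together with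
`D₋₁` (defined by `(D₋₁)_{i,j} = (-1)^{i+j+1} D_{i,j}`) satisfies the wavelet
orthogonality conditions `C₋₁·D₋₁ᵀ + C·Dᵀ = 0` and `D₋₁·D₋₁ᵀ + D·Dᵀ = 2·I`,
where `(C₋₁)_{i,j} = (-1)^{i+j} C_{i,j}`. -/
def IsWaveletMatrix {m : ℕ} (C D : Matrix (Fin m) (Fin m) ℝ) : Prop :=
  (∀ i j : Fin m, j < i → D i j = 0) ∧
  (∀ i : Fin m, 0 < D i i) ∧
  (∀ i : Fin m, (i : ℕ) = m - 1 → D i i = 1) ∧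
  (Matrix.of fun i j : Fin m => (-1 : ℝ) ^ ((i : ℕ) + (j : ℕ)) * C i j) *
      (Matrix.of fun i j : Fin m => (-1 : ℝ) ^ ((i : ℕ) + (j : ℕ) + 1) * D i j)ᵀ +
    C * Dᵀ = 0 ∧
  (Matrix.of fun i j : Fin m => (-1 : ℝ) ^ ((i : ℕ) + (j : ℕ) + 1) * D i j) *
      (Matrix.of fun i j : Fin m => (-1 : ℝ) ^ ((i : ℕ) + (j : ℕ) + 1) * D i j)ᵀ +
    D * Dᵀ = (2 : ℝ) • (1 : Matrix (Fin m) (Fin m) ℝ)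

open Polynomial

/-! ### Rodrigues' formula and integration by parts -/

lemma iterate_derivative_eval (p : ℝ[X]) (n : ℕ) :
    iteratedDeriv n (fun s => p.eval s) = fun s => (derivative^[n] p).eval s := by
  induction n with
  | zero => simp
  | succ n ih =>
    rw [iteratedDeriv_succ, ih]
    funext s
    rw [Polynomial.deriv, Function.iterate_succ_apply']

/-- The unnormalised Legendre polynomial `dⁿ/dXⁿ (X² - 1)ⁿ` of Rodrigues' formula. -/
noncomputable def rodrigues (n : ℕ) : ℝ[X] := derivative^[n] ((X ^ 2 - 1) ^ n)

/-- The scalar with `p̂_n = legendreScale n · rodrigues n`. -/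
noncomputable def legendreScale (n : ℕ) : ℝ :=
  Real.sqrt ((2 * n + 1) / 2) * ((1 : ℝ) / (2 ^ n * n.factorial))

lemma legendreHat_eq (n : ℕ) (t : ℝ) :
    legendreHat n t = legendreScale n * (rodrigues n).eval t := by
  have h := congrFun (iterate_derivative_eval ((X ^ 2 - 1) ^ n) n) t
  simp only [eval_pow, eval_sub, eval_X, eval_one] at h
  simp only [legendreHat, legendreScale, rodrigues, h]

/-- `m`-fold integration by parts on `[-1,1]` against `Q⁽ᵐ⁾`, without boundary terms. -/
lemma integral_mul_iterate_derivative (m : ℕ) (f Q : ℝ[X])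
    (hQ : ∀ j < m, (derivative^[j] Q).eval 1 = 0 ∧ (derivative^[j] Q).eval (-1) = 0) :
    ∫ u in (-1 : ℝ)..1, f.eval u * (derivative^[m] Q).eval u =
      (-1) ^ m * ∫ u in (-1 : ℝ)..1, (derivative^[m] f).eval u * Q.eval u := by
  induction m generalizing f with
  | zero => simp
  | succ m ih =>
    rw [Function.iterate_succ_apply', Function.iterate_succ_apply,
      intervalIntegral.integral_mul_deriv_eq_deriv_mul
        (fun x _ => f.hasDerivAt x) (fun x _ => (derivative^[m] Q).hasDerivAt x)
        ((Polynomial.continuous _).intervalIntegrable _ _)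
        ((Polynomial.continuous _).intervalIntegrable _ _),
      ih _ fun j hj => hQ j (by omega), (hQ m (by omega)).1, (hQ m (by omega)).2]
    ring

lemma eval_iterate_derivative_sq_sub_one (m j : ℕ) (hj : j < m) :
    (derivative^[j] ((X ^ 2 - 1 : ℝ[X]) ^ m)).eval 1 = 0 ∧
      (derivative^[j] ((X ^ 2 - 1 : ℝ[X]) ^ m)).eval (-1) = 0 := by
  obtain ⟨q, hq⟩ := pow_sub_dvd_iterate_derivative_pow (X ^ 2 - 1 : ℝ[X]) m j
  have : m - j ≠ 0 := by omega
  simp [hq, this]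

/-- `(X² - 1)^(k+1)` has leading term `X^(2k+2)` and no term of degree `2k+1`, so `2k+1`
derivatives leave a multiple of `X`. -/
lemma iterate_derivative_rodrigues (k : ℕ) :
    derivative^[k] (rodrigues (k + 1)) = C ((2 * k + 2).factorial : ℝ) * X := by
  have hexp : (X ^ 2 - 1 : ℝ[X]) ^ (k + 1) = expand ℝ 2 ((X - C 1) ^ (k + 1)) := by simp
  have hdeg : ((X - C 1 : ℝ[X]) ^ (k + 1)).natDegree = k + 1 := by
    rw [natDegree_pow, natDegree_X_sub_C, mul_one]
  have hlead : ((X - C 1 : ℝ[X]) ^ (k + 1)).coeff (k + 1) = 1 := by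
    have := ((monic_X_sub_C (1 : ℝ)).pow (k + 1)).coeff_natDegree
    rwa [hdeg] at this
  rw [rodrigues, ← Function.iterate_add_apply, hexp]
  ext m
  rw [coeff_iterate_derivative, coeff_expand two_pos, coeff_C_mul, coeff_X]
  rcases m with _ | _ | m
  · have : ¬ 2 ∣ 0 + (k + (k + 1)) := by omega
    rw [if_neg this]
    simp
  · have h1 : 2 ∣ 0 + 1 + (k + (k + 1)) := by omega
    have h2 : (0 + 1 + (k + (k + 1))) / 2 = k + 1 := by omega
    have h3 : 0 + 1 + (k + (k + 1)) = (k + (k + 1)) + 1 := by omega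
    have h4 : k + (k + 1) + 1 = 2 * k + 2 := by omega
    rw [if_pos h1, h2, hlead, h3]
    have h5 := Nat.factorial_mul_descFactorial (Nat.le_succ (k + (k + 1)))
    rw [Nat.succ_sub (le_refl _), Nat.sub_self, Nat.factorial_one, one_mul, Nat.succ_eq_add_one, h4]
      at h5
    rw [h4, h5]
    simp
  · rw [if_neg (by omega : ¬ 1 = m + 1 + 1)]
    split_ifs with h
    · rw [coeff_eq_zero_of_natDegree_lt (by rw [hdeg]; omega)]
      simp
    · simp

/-! ### Moments of powers of `u² - 1` -/

/-- The moment `∫ (u² - 1)ⁿ du` over `[-1,1]`. -/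
noncomputable def moment (n : ℕ) : ℝ := ∫ u in (-1 : ℝ)..1, (u ^ 2 - 1) ^ n

lemma moment_succ (k : ℕ) : (2 * k + 3) * moment (k + 1) = -(2 * k + 2) * moment k := by
  have h : ∫ u in (-1 : ℝ)..1,
      ((2 * k + 3) * (u ^ 2 - 1) ^ (k + 1) + (2 * k + 2) * (u ^ 2 - 1) ^ k) = 0 := by
    have hd : ∀ u ∈ Set.uIcc (-1 : ℝ) 1, HasDerivAt (fun u : ℝ => u * (u ^ 2 - 1) ^ (k + 1))
        ((2 * k + 3) * (u ^ 2 - 1) ^ (k + 1) + (2 * k + 2) * (u ^ 2 - 1) ^ k) u := by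
      intro u _
      have h1 := ((hasDerivAt_id' u).mul ((((hasDerivAt_id' u).pow 2).sub_const 1).pow (k + 1)))
      refine h1.congr_deriv ?_
      simp
      ring
    rw [intervalIntegral.integral_eq_sub_of_hasDerivAt hd
      (Continuous.intervalIntegrable (by fun_prop) _ _)]
    simp
  rw [intervalIntegral.integral_add (Continuous.intervalIntegrable (by fun_prop) _ _)
    (Continuous.intervalIntegrable (by fun_prop) _ _), intervalIntegral.integral_const_mul,
    intervalIntegral.integral_const_mul] at h
  simp only [moment]
  linarith

lemma moment_ne_zero (n : ℕ) : moment n ≠ 0 := by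
  induction n with
  | zero => norm_num [moment]
  | succ k ih =>
    intro h
    have h1 := moment_succ k
    rw [h, mul_zero] at h1
    have h2 : -(2 * (k : ℝ) + 2) ≠ 0 := by
      have : (0 : ℝ) ≤ k := k.cast_nonneg
      linarith
    exact mul_ne_zero h2 ih h1.symm

lemma integral_odd_moment (k : ℕ) : ∫ u in (-1 : ℝ)..1, u * (u ^ 2 - 1) ^ k = 0 := by
  have hd : ∀ u ∈ Set.uIcc (-1 : ℝ) 1,
      HasDerivAt (fun u : ℝ => (u ^ 2 - 1) ^ (k + 1) / (2 * (k + 1))) (u * (u ^ 2 - 1) ^ k) u := by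
    intro u _
    have h1 := (((((hasDerivAt_id' u).pow 2).sub_const 1).pow (k + 1)).div_const (2 * ((k : ℝ) + 1)))
    refine h1.congr_deriv ?_
    have : (k : ℝ) + 1 ≠ 0 := by positivity
    simp
    field_simp
  rw [intervalIntegral.integral_eq_sub_of_hasDerivAt hd
    (Continuous.intervalIntegrable (by fun_prop) _ _)]
  simp

/-! ### The last two entries of a row of the refinement matrix -/

lemma iterate_derivative_comp_half (p : ℝ[X]) (m : ℕ) :
    derivative^[m] (p.comp (C (1 / 2) * X + C (1 / 2))) =
      C ((1 / 2) ^ m) * (derivative^[m] p).comp (C (1 / 2) * X + C (1 / 2)) := by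
  induction m generalizing p with
  | zero => simp
  | succ m ih =>
    rw [Function.iterate_succ_apply', ih, Function.iterate_succ_apply', derivative_C_mul,
      derivative_comp, pow_succ, C_mul]
    simp only [derivative_add, derivative_C_mul, derivative_X, derivative_C]
    ring

/-- The substitution `u = 2t - 1` followed by integration by parts. -/
lemma alpertC_eq (i j : ℕ) :
    alpertC i j = legendreScale i * legendreScale j * (-1) ^ j * (1 / 2) ^ j *
      ∫ u in (-1 : ℝ)..1,
        (derivative^[j] (rodrigues i)).eval (1 / 2 * u + 1 / 2) * (u ^ 2 - 1) ^ j := by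
  have h1 := intervalIntegral.integral_comp_mul_sub (a := 0) (b := 1)
    (fun u => ((rodrigues i).comp (C (1 / 2) * X + C (1 / 2))).eval u * (rodrigues j).eval u)
    (two_ne_zero (α := ℝ)) 1
  have h2 := integral_mul_iterate_derivative j
    ((rodrigues i).comp (C (1 / 2) * X + C (1 / 2))) ((X ^ 2 - 1) ^ j)
    (eval_iterate_derivative_sq_sub_one j)
  rw [← rodrigues, iterate_derivative_comp_half] at h2
  norm_num only at h1
  rw [h2] at h1
  simp only [alpertC, legendreHat_eq]
  have h3 : ∀ t : ℝ, legendreScale i * (rodrigues i).eval t *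
      (legendreScale j * (rodrigues j).eval (2 * t - 1)) =
      (legendreScale i * legendreScale j) *
      (((rodrigues i).comp (C (1 / 2) * X + C (1 / 2))).eval (2 * t - 1) *
        (rodrigues j).eval (2 * t - 1)) := by
    intro t
    have : 1 / 2 * (2 * t - 1) + 1 / 2 = t := by ring
    simp only [eval_comp, eval_add, eval_mul, eval_C, eval_X, this]
    ring
  simp only [h3, intervalIntegral.integral_const_mul]
  rw [h1]
  simp only [eval_mul, eval_C, eval_comp, eval_add, eval_X, eval_pow, eval_sub, eval_one,
    mul_assoc, intervalIntegral.integral_const_mul, smul_eq_mul]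
  ring

lemma alpertC_subdiag (k : ℕ) :
    alpertC (k + 1) k = legendreScale (k + 1) * legendreScale k * (-1) ^ k * (1 / 2) ^ (k + 1) *
      (2 * k + 2).factorial * moment k := by
  have h : ∫ u in (-1 : ℝ)..1, ((2 * k + 2).factorial : ℝ) * (1 / 2 * u + 1 / 2) * (u ^ 2 - 1) ^ k =
      (2 * k + 2).factorial * (1 / 2) * moment k := by
    have : ∀ u : ℝ, ((2 * k + 2).factorial : ℝ) * (1 / 2 * u + 1 / 2) * (u ^ 2 - 1) ^ k =
      ((2 * k + 2).factorial * (1 / 2)) * (u * (u ^ 2 - 1) ^ k) +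
      ((2 * k + 2).factorial * (1 / 2)) * (u ^ 2 - 1) ^ k := fun u => by ring
    simp only [this]
    rw [intervalIntegral.integral_add (Continuous.intervalIntegrable (by fun_prop) _ _)
      (Continuous.intervalIntegrable (by fun_prop) _ _), intervalIntegral.integral_const_mul,
      intervalIntegral.integral_const_mul, integral_odd_moment, moment]
    ring
  rw [alpertC_eq, iterate_derivative_rodrigues]
  simp only [eval_mul, eval_C, eval_X]
  rw [h]
  ring

lemma alpertC_diag (k : ℕ) :
    alpertC (k + 1) (k + 1) = legendreScale (k + 1) * legendreScale (k + 1) * (-1) ^ (k + 1) *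
      (1 / 2) ^ (k + 1) * (2 * k + 2).factorial * moment (k + 1) := by
  rw [alpertC_eq, Function.iterate_succ_apply', iterate_derivative_rodrigues]
  simp only [derivative_C_mul, derivative_X, mul_one, eval_C, intervalIntegral.integral_const_mul,
    moment]
  ring

lemma legendreScale_pos (n : ℕ) : 0 < legendreScale n := by
  unfold legendreScale
  positivity

lemma alpertC_diag_ne_zero (k : ℕ) : alpertC (k + 1) (k + 1) ≠ 0 := by
  rw [alpertC_diag]
  have h1 := (legendreScale_pos (k + 1)).ne'
  have h2 := moment_ne_zero (k + 1)
  have h3 : ((2 * k + 2).factorial : ℝ) ≠ 0 := by positivity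
  simp [h1, h2, h3]

/-- Together with `alpertC_diag_ne_zero`, this is all that the wavelet matrix entries below use
about the Alpert coefficients. -/
lemma alpertC_ratio (k : ℕ) :
    alpertC (k + 1) k =
      Real.sqrt ((2 * k + 3) * (2 * k + 1)) * alpertC (k + 1) (k + 1) := by
  have hm := moment_succ k
  have hsqrt : Real.sqrt ((2 * (k : ℝ) + 3) * (2 * k + 1)) =
      2 * (Real.sqrt ((2 * k + 3) / 2) * Real.sqrt ((2 * k + 1) / 2)) := by
    rw [← Real.sqrt_mul (by positivity), Real.sqrt_eq_iff_mul_self_eq (by positivity) (by positivity)]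
    have := Real.mul_self_sqrt (show (0 : ℝ) ≤ (2 * k + 3) / 2 * ((2 * k + 1) / 2) by positivity)
    linear_combination -4 * this
  have hself := Real.mul_self_sqrt (show (0 : ℝ) ≤ (2 * k + 3) / 2 by positivity)
  have hs : legendreScale (k + 1) =
      Real.sqrt ((2 * k + 3) / 2) * (1 / (2 ^ k * k.factorial) * (1 / (2 * (k + 1)))) := by
    rw [legendreScale, Nat.factorial_succ]
    push_cast
    rw [show (2 * ((k : ℝ) + 1) + 1) = 2 * k + 3 by ring]
    congr 1
    field_simp
    ring
  have hm' : moment k = -((2 * k + 3) / (2 * (k + 1))) * moment (k + 1) := by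
    field_simp
    linarith
  rw [alpertC_subdiag, alpertC_diag, hsqrt, hm']
  nth_rewrite 3 [hs]
  rw [legendreScale.eq_1 k]
  generalize Real.sqrt ((2 * (k : ℝ) + 3) / 2) = S at *
  linear_combination legendreScale (k + 1) * Real.sqrt ((2 * k + 1) / 2) * (k.factorial : ℝ)⁻¹ *
    ((2 : ℝ) ^ k)⁻¹ * (2 * k + 2).factorial * (2 + k * 2 : ℝ)⁻¹ * moment (k + 1) * (-1) ^ k *
    (1 / 2) ^ k * hself

/-! ### Rows of the wavelet matrix -/

/-- The unit vector `(a, b)` with `a > 0` orthogonal to `(c_{k+1,k}, c_{k+1,k+1})`. -/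
lemma entries_of_orthogonal (k : ℕ) (a b : ℝ) (ha : 0 < a) (hnorm : a * a + b * b = 1)
    (horth : alpertC (k + 1) k * a + alpertC (k + 1) (k + 1) * b = 0) :
    a = 1 / (2 * (k + 1)) ∧ b = -Real.sqrt ((2 * k + 3) * (2 * k + 1)) / (2 * (k + 1)) := by
  have hb : b = -Real.sqrt ((2 * k + 3) * (2 * k + 1)) * a := by
    apply mul_left_cancel₀ (alpertC_diag_ne_zero k)
    rw [alpertC_ratio] at horth
    linarith
  have hself := Real.mul_self_sqrt (show (0 : ℝ) ≤ (2 * k + 3) * (2 * k + 1) by positivity)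
  have hsq : (2 * (k + 1) * a) ^ 2 = 1 := by
    rw [hb] at hnorm
    linear_combination hnorm - a * a * hself
  have h1 : 2 * (k + 1) * a = 1 := by
    have h0 : 0 < 2 * ((k : ℝ) + 1) * a := by positivity
    nlinarith
  have ha' : a = 1 / (2 * (k + 1)) := by
    field_simp
    linarith
  refine ⟨ha', ?_⟩
  rw [hb, ha']
  ring

/-- On entries of opposite parity the first wavelet condition reads `(C Dᵀ)_{ij} = 0`. -/
lemma wavelet_orth {m : ℕ} {C D : Matrix (Fin m) (Fin m) ℝ} (h : IsWaveletMatrix C D)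
    (i j : Fin m) (hij : Odd ((i : ℕ) + j)) : ∑ l, C i l * D j l = 0 := by
  have h1 := congrFun (congrFun h.2.2.2.1 i) j
  simp only [Matrix.add_apply, Matrix.mul_apply, Matrix.of_apply, Matrix.transpose_apply,
    Matrix.zero_apply] at h1
  have h2 : ∀ l : Fin m, (-1 : ℝ) ^ ((i : ℕ) + l) * C i l * ((-1) ^ ((j : ℕ) + l + 1) * D j l) =
      C i l * D j l := by
    intro l
    have : (-1 : ℝ) ^ ((i : ℕ) + l) * (-1) ^ ((j : ℕ) + l + 1) = 1 := by
      rw [← pow_add]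
      apply Even.neg_one_pow
      grind
    linear_combination C i l * D j l * this
  simp only [h2] at h1
  linarith

/-- On entries of equal parity the second wavelet condition reads `(D Dᵀ)_{ij} = δ_{ij}`. -/
lemma wavelet_gram {m : ℕ} {C D : Matrix (Fin m) (Fin m) ℝ} (h : IsWaveletMatrix C D)
    (i j : Fin m) (hij : Even ((i : ℕ) + j)) :
    ∑ l, D i l * D j l = (1 : Matrix (Fin m) (Fin m) ℝ) i j := by
  have h1 := congrFun (congrFun h.2.2.2.2 i) j
  simp only [Matrix.add_apply, Matrix.mul_apply, Matrix.of_apply, Matrix.transpose_apply,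
    Matrix.smul_apply, smul_eq_mul] at h1
  have h2 : ∀ l : Fin m,
      (-1 : ℝ) ^ ((i : ℕ) + l + 1) * D i l * ((-1) ^ ((j : ℕ) + l + 1) * D j l) =
      D i l * D j l := by
    intro l
    have : (-1 : ℝ) ^ ((i : ℕ) + l + 1) * (-1) ^ ((j : ℕ) + l + 1) = 1 := by
      rw [← pow_add]
      apply Even.neg_one_pow
      grind
    linear_combination D i l * D j l * this
  simp only [h2] at h1
  linarith

/-- If row `k` of `D` lives on columns `k` and `k+1` only, its entries are determined. -/
lemma entries_of_row {m : ℕ} {D : Matrix (Fin m) (Fin m) ℝ}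
    (h : IsWaveletMatrix (Matrix.of fun i j : Fin m => alpertC i j) D) (k : ℕ) (hk : k + 1 < m)
    (hrow : ∀ l : Fin m, k + 1 < (l : ℕ) → D ⟨k, by omega⟩ l = 0) :
    D ⟨k, by omega⟩ ⟨k, by omega⟩ = 1 / (2 * (k + 1)) ∧
      D ⟨k, by omega⟩ ⟨k + 1, hk⟩ = -Real.sqrt ((2 * k + 3) * (2 * k + 1)) / (2 * (k + 1)) := by
  have hsum : ∀ f : Fin m → ℝ, ∑ l, f l * D ⟨k, by omega⟩ l =
      f ⟨k, by omega⟩ * D ⟨k, by omega⟩ ⟨k, by omega⟩ +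
        f ⟨k + 1, hk⟩ * D ⟨k, by omega⟩ ⟨k + 1, hk⟩ := by
    intro f
    apply Fintype.sum_eq_add
    · simp
    · rintro l ⟨h1, h2⟩
      have h1' : (l : ℕ) ≠ k := fun e => h1 (Fin.ext e)
      have h2' : (l : ℕ) ≠ k + 1 := fun e => h2 (Fin.ext e)
      rcases lt_or_gt_of_ne h1' with hl | hl
      · rw [h.1 ⟨k, by omega⟩ l (Fin.lt_def.2 hl), mul_zero]
      · rw [hrow l (by omega), mul_zero]
  have hgram := wavelet_gram h ⟨k, by omega⟩ ⟨k, by omega⟩ ⟨k, rfl⟩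
  have horth := wavelet_orth h ⟨k + 1, hk⟩ ⟨k, by omega⟩ ⟨k, by simp; ring⟩
  rw [hsum] at hgram
  rw [hsum] at horth
  rw [Matrix.one_apply_eq] at hgram
  exact entries_of_orthogonal k _ _ (h.2.1 _) hgram (by simpa using horth)

theorem wavelet_matrix_entries (n : ℕ) (hn : 1 ≤ n)
    (D : Matrix (Fin (n + 1)) (Fin (n + 1)) ℝ)
    (hD : IsWaveletMatrix (Matrix.of fun i j : Fin (n + 1) => alpertC i j) D) :
    D ⟨n - 1, by omega⟩ ⟨n - 1, by omega⟩ = 1 / (2 * n) ∧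
    D ⟨n - 1, by omega⟩ ⟨n, by omega⟩ = -Real.sqrt ((2 * n + 1) * (2 * n - 1)) / (2 * n) ∧
    (∀ hn2 : 2 ≤ n,
      D ⟨n - 2, by omega⟩ ⟨n - 2, by omega⟩ = 1 / (2 * n - 2) ∧
      D ⟨n - 2, by omega⟩ ⟨n - 1, by omega⟩ =
        -Real.sqrt ((2 * n - 1) * (2 * n - 3)) / (2 * n - 2) ∧
      D ⟨n - 2, by omega⟩ ⟨n, by omega⟩ = 0) := by
  obtain ⟨k, rfl⟩ : ∃ k, n = k + 1 := ⟨n - 1, by omega⟩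
  have hlast := entries_of_row hD k (by omega) fun l hl => absurd l.isLt (by omega)
  have e1 : 2 * ((k : ℝ) + 1) + 1 = 2 * k + 3 := by ring
  have e2 : 2 * ((k : ℝ) + 1) - 1 = 2 * k + 1 := by ring
  refine ⟨by simpa using hlast.1, by push_cast; rw [e1, e2]; exact hlast.2, fun hn2 => ?_⟩
  obtain ⟨r, rfl⟩ : ∃ r, k = r + 1 := ⟨k - 1, by omega⟩
  -- The last row of `D` is `eₙ`, so orthogonality to it kills the last entry of row `n - 2`.
  have hzero : D ⟨r, by omega⟩ ⟨r + 1 + 1, by omega⟩ = 0 := by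
    have hg := wavelet_gram hD ⟨r, by omega⟩ ⟨r + 1 + 1, by omega⟩ ⟨r + 1, by simp; ring⟩
    rw [Fintype.sum_eq_single ⟨r + 1 + 1, by omega⟩, hD.2.2.1 ⟨r + 1 + 1, by omega⟩ rfl,
      Matrix.one_apply_ne (by simp; omega), mul_one] at hg
    · exact hg
    · intro l hl
      have hl' : (l : ℕ) ≠ r + 1 + 1 := fun e => hl (Fin.ext e)
      rw [hD.1 ⟨r + 1 + 1, by omega⟩ l (Fin.lt_def.2 (by have := l.isLt; simp; omega)), mul_zero]
  have hrow := entries_of_row hD r (by omega) fun l hl => by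
    have : l = ⟨r + 1 + 1, by omega⟩ := Fin.ext (by have := l.isLt; simp; omega)
    rw [this, hzero]
  have e3 : 2 * ((r : ℝ) + 1 + 1) - 2 = 2 * (r + 1) := by ring
  have e4 : 2 * ((r : ℝ) + 1 + 1) - 1 = 2 * r + 3 := by ring
  have e5 : 2 * ((r : ℝ) + 1 + 1) - 3 = 2 * r + 1 := by ring
  push_cast
  rw [e3, e4, e5]
  exact ⟨hrow.1, hrow.2, hzero⟩
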